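/- Let n ≥ 60 and 1 ≤ k ≤ n-2 be integers and let s_{n,k} ∈ (0,1) be the unique zero of the function s ↦ ₂F₁((n-1)/2, -1/2; k/2; s). Then: (a) if 1/3 ≤ k/n ≤ 7/8 then s_{n,k} ≤ k/n + 3/(5√n); (b) if 7/8 ≤ k/n ≤ 9/10 then s_{n,k} ≤ k/n + 2/(5√n); (c) if 9/10 ≤ k/n ≤ 15/16 then s_{n,k} ≤ k/n + 9/(25√n). -/

import Mathlib

/-!
# Upper estimates for the zero of a hypergeometric function

Write `F(s) = ₂F₁((n-1)/2, -1/2; k/2; s)`. The recursion for the coefficients yields the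
hypergeometric equation `s(1-s)F'' + (k/2 - (n/2)s)F' + ((n-1)/4)F = 0`, and since all coefficients
of positive order are nonpositive, `F` decreases on `(0,1)`. Suppose that the zero `s₀` lies beyond
`s* = k/n + δ/√n`, so that `F > 0` on `(0, s*]`.

Put `r = 1/√n` and `s = k/n + r(δ - Y)`, so that `s*` corresponds to `Y = 0`. With the weight
`s^(k/2) (1-s)^((n-k)/2)`, which makes the equation self-adjoint, the weighted Wronskian of `F` and
a function `G(Y)` is monotone in `Y` on `[0, T]` whenever
`2s(1-s)G'' + (δ - Y)G' + (1/2 - r²/2)G ≥ 0` there. If moreover `G(0) = 0 < G'(0)` and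
`G'(T) ≤ 0 ≤ G(T)`, the Wronskian is positive at `Y = 0` and nonpositive at `Y = T`, a
contradiction; hence `s₀ ≤ s*` (`sturm_contradiction`, `zero_le_of_trial`).

It remains to exhibit such `G`. Explicit polynomials of degree at most 8, nonnegative and concave on
`[0, 13/5]`, are enough. Because `G'' ≤ 0`, the factor `s(1-s)` may be replaced by any upper bound:
`1/4` for the range `k/n ≥ 1/3`, and the value for `k/n = 7/8` or `9/10`, linearized in `r`, for the
other two (`sub_of_endpoints`). In the range `k/n ≥ 9/10`, separate polynomials serve `r ≤ 1/12` and
`r ≥ 1/12`. What is left are inequalities for polynomials in `Y` alone, and those follow from the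
nonnegativity of Bernstein coefficients on a few subintervals of `[0, 13/5]` (`bern`).
-/


/-- The Gauss hypergeometric function `₂F₁(a,b;c;s)`, defined by its power series. -/
noncomputable def hyp2F1 (a b c s : ℝ) : ℝ :=
  ∑' m : ℕ, ((ascPochhammer ℝ m).eval a * (ascPochhammer ℝ m).eval b)
    / ((ascPochhammer ℝ m).eval c * (m.factorial : ℝ)) * s ^ m

/-! ### Power series with polynomially bounded coefficients -/

/-- The coefficient sequence `u` grows at most polynomially. This is stable under the coefficient
map of differentiation and makes `∑ u m * s ^ m` converge absolutely for `|s| < 1`. -/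
def PolyGrowth (u : ℕ → ℝ) : Prop :=
  ∃ (C : ℝ) (N : ℕ), ∀ m : ℕ, |u m| ≤ C * ((m : ℝ) + 1) ^ N

/-- Coefficients of the derivative of `∑ u m * s ^ m`. -/
def dcoef (u : ℕ → ℝ) (m : ℕ) : ℝ := ((m : ℝ) + 1) * u (m + 1)

/-- Sum of the power series with coefficients `u`. -/
noncomputable def psum (u : ℕ → ℝ) (s : ℝ) : ℝ := ∑' m : ℕ, u m * s ^ m

lemma PolyGrowth.dcoef {u : ℕ → ℝ} (h : PolyGrowth u) : PolyGrowth (dcoef u) := by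
  obtain ⟨C, N, h⟩ := h
  have hC : 0 ≤ C := by simpa using (abs_nonneg _).trans (h 0)
  refine ⟨C * 2 ^ N, N + 1, fun m => ?_⟩
  have h1 := h (m + 1)
  have hm : (0 : ℝ) ≤ m := Nat.cast_nonneg m
  have h2 : (((m + 1 : ℕ) : ℝ) + 1) ^ N ≤ 2 ^ N * ((m : ℝ) + 1) ^ N := by
    rw [← mul_pow]
    apply pow_le_pow_left₀ (by positivity)
    push_cast; linarith
  rw [_root_.dcoef, abs_mul, abs_of_nonneg (by positivity : (0 : ℝ) ≤ (m : ℝ) + 1)]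
  calc ((m : ℝ) + 1) * |u (m + 1)| ≤ ((m : ℝ) + 1) * (C * (2 ^ N * ((m : ℝ) + 1) ^ N)) := by
        gcongr
        exact h1.trans (by gcongr)
    _ = C * 2 ^ N * ((m : ℝ) + 1) ^ (N + 1) := by ring

lemma PolyGrowth.summable_abs {u : ℕ → ℝ} (h : PolyGrowth u) {ρ : ℝ} (h0 : 0 ≤ ρ) (h1 : ρ < 1) :
    Summable fun m : ℕ => |u m| * ρ ^ m := by
  obtain ⟨C, N, h⟩ := h
  have hC : 0 ≤ C := by simpa using (abs_nonneg _).trans (h 0)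
  have hs : Summable fun m : ℕ => (m : ℝ) ^ N * ρ ^ m :=
    summable_pow_mul_geometric_of_norm_lt_one N (by rwa [Real.norm_of_nonneg h0])
  refine Summable.of_nonneg_of_le (fun m => by positivity) (fun m => ?_)
    (((summable_geometric_of_lt_one h0 h1).add (hs.mul_left (2 ^ N))).mul_left C)
  have key : ((m : ℝ) + 1) ^ N ≤ 1 + 2 ^ N * (m : ℝ) ^ N := by
    rcases Nat.eq_zero_or_pos m with rfl | hm
    · simp only [Nat.cast_zero, zero_add, one_pow]
      have : (0 : ℝ) ≤ 2 ^ N * 0 ^ N := by positivity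
      linarith
    · have hm' : (1 : ℝ) ≤ m := by exact_mod_cast hm
      have : ((m : ℝ) + 1) ^ N ≤ (2 * (m : ℝ)) ^ N :=
        pow_le_pow_left₀ (by positivity) (by linarith) N
      rw [mul_pow] at this
      linarith
  calc |u m| * ρ ^ m ≤ (C * (1 + 2 ^ N * (m : ℝ) ^ N)) * ρ ^ m := by
        gcongr
        exact (h m).trans (by gcongr)
    _ = C * (ρ ^ m + 2 ^ N * ((m : ℝ) ^ N * ρ ^ m)) := by ring

lemma PolyGrowth.hasSum {u : ℕ → ℝ} (h : PolyGrowth u) {s : ℝ} (hs : |s| < 1) :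
    HasSum (fun m : ℕ => u m * s ^ m) (psum u s) := by
  apply Summable.hasSum
  apply Summable.of_norm
  simpa [abs_mul, abs_pow] using h.summable_abs (abs_nonneg s) hs

lemma PolyGrowth.hasDerivAt {u : ℕ → ℝ} (h : PolyGrowth u) {s : ℝ} (hs : |s| < 1) :
    HasDerivAt (psum u) (psum (_root_.dcoef u) s) s := by
  obtain ⟨ρ, hsρ, hρ⟩ := exists_between hs
  have hρ0 : 0 ≤ ρ := (abs_nonneg s).trans hsρ.le
  have hsum : Summable fun m : ℕ => (m : ℝ) * |u m| * ρ ^ (m - 1) := by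
    rw [← summable_nat_add_iff 1]
    refine (h.dcoef.summable_abs hρ0 hρ).congr fun m => ?_
    rw [_root_.dcoef, abs_mul, abs_of_nonneg (by positivity : (0 : ℝ) ≤ (m : ℝ) + 1)]
    simp
  have key := hasDerivAt_tsum_of_isPreconnected (𝕜 := ℝ) (t := Metric.ball (0 : ℝ) ρ)
    (g := fun (m : ℕ) (y : ℝ) => u m * y ^ m)
    (g' := fun (m : ℕ) (y : ℝ) => u m * ((m : ℝ) * y ^ (m - 1))) (y₀ := 0) (y := s)
    hsum Metric.isOpen_ball (convex_ball (0 : ℝ) ρ).isPreconnected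
    (fun m y _ => (hasDerivAt_pow m y).const_mul (u m))
    (fun m y hy => by
      have hy' : |y| ≤ ρ := by
        rw [Metric.mem_ball, dist_zero_right, Real.norm_eq_abs] at hy; exact hy.le
      rw [Real.norm_eq_abs, abs_mul, abs_mul, abs_pow, Nat.abs_cast]
      calc |u m| * ((m : ℝ) * |y| ^ (m - 1)) ≤ |u m| * ((m : ℝ) * ρ ^ (m - 1)) := by gcongr
        _ = (m : ℝ) * |u m| * ρ ^ (m - 1) := by ring)
    (by simpa using (abs_nonneg s).trans_lt hsρ)
    ((h.hasSum (by simp : |(0 : ℝ)| < 1)).summable)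
    (by simpa using hsρ)
  suffices e : psum (_root_.dcoef u) s = ∑' m : ℕ, u m * ((m : ℝ) * s ^ (m - 1)) by
    rw [e]; exact key
  have hsum' : Summable fun m : ℕ => u m * ((m : ℝ) * s ^ (m - 1)) := by
    refine Summable.of_norm_bounded hsum fun m => ?_
    rw [Real.norm_eq_abs, abs_mul, abs_mul, abs_pow, Nat.abs_cast]
    calc |u m| * ((m : ℝ) * |s| ^ (m - 1)) ≤ |u m| * ((m : ℝ) * ρ ^ (m - 1)) := by gcongr
      _ = (m : ℝ) * |u m| * ρ ^ (m - 1) := by ring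
  rw [hsum'.tsum_eq_zero_add]
  simp only [psum, _root_.dcoef, Nat.cast_zero, zero_mul, mul_zero, zero_add]
  refine tsum_congr fun m => ?_
  push_cast
  ring

lemma hasSum_shift {w : ℕ → ℝ} {s A : ℝ} (h : HasSum (fun m : ℕ => w (m + 1) * s ^ m) A) :
    HasSum (fun m : ℕ => w m * s ^ m) (w 0 + s * A) := by
  have h' := h.mul_left s
  have e : (fun m : ℕ => s * (w (m + 1) * s ^ m)) = fun m : ℕ => w (m + 1) * s ^ (m + 1) := by
    funext m; ring
  rw [e] at h'
  rw [← hasSum_nat_add_iff' 1]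
  simpa using h'

/-! ### The hypergeometric coefficients and equation -/

/-- The coefficient of `s ^ m` in `₂F₁(a, b; c; s)`. -/
noncomputable def hcoef (a b c : ℝ) (m : ℕ) : ℝ :=
  ((ascPochhammer ℝ m).eval a * (ascPochhammer ℝ m).eval b)
    / ((ascPochhammer ℝ m).eval c * (m.factorial : ℝ))

lemma hcoef_succ (a b : ℝ) {c : ℝ} (hc : 0 < c) (m : ℕ) :
    hcoef a b c (m + 1) = hcoef a b c m * ((a + m) * (b + m) / ((c + m) * (m + 1))) := by
  have h1 : (ascPochhammer ℝ m).eval c ≠ 0 := (ascPochhammer_pos m c hc).ne'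
  have h2 : (m.factorial : ℝ) ≠ 0 := by exact_mod_cast m.factorial_ne_zero
  have h3 : c + m ≠ 0 := by positivity
  have h4 : (m : ℝ) + 1 ≠ 0 := by positivity
  simp only [hcoef, ascPochhammer_succ_eval, Nat.factorial_succ]
  push_cast
  field_simp

lemma hcoef_zero (a b c : ℝ) : hcoef a b c 0 = 1 := by simp [hcoef]

lemma hcoef_growth {a c : ℝ} (ha : 0 ≤ a) (hc : 1 ≤ c) : PolyGrowth (hcoef a (-1 / 2) c) := by
  obtain ⟨N, hN⟩ := exists_nat_ge a
  refine ⟨1, N, fun m => ?_⟩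
  rw [one_mul]
  induction m with
  | zero => simp [hcoef_zero]
  | succ m ih =>
    have hm : (0 : ℝ) ≤ m := Nat.cast_nonneg m
    have hN0 : (0 : ℝ) ≤ N := Nat.cast_nonneg N
    rw [hcoef_succ _ _ (by linarith), abs_mul]
    have h1 : |(a + m) * (-1 / 2 + m) / ((c + m) * (m + 1))| ≤ 1 + N * (1 / ((m : ℝ) + 1)) := by
      have e : (a + m) * (-1 / 2 + m) / ((c + m) * (m + 1))
          = ((a + m) / (c + m)) * ((-1 / 2 + m) / (m + 1)) := by
        field_simp
      have e1 : |(-1 / 2 + (m : ℝ)) / (m + 1)| ≤ 1 := by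
        rw [abs_div, abs_of_pos (by positivity : (0 : ℝ) < (m : ℝ) + 1),
          div_le_one (by positivity), abs_le]
        constructor <;> linarith
      have e2 : |(a + m) / (c + m)| ≤ 1 + N * (1 / ((m : ℝ) + 1)) := by
        have : 0 < c + m := by linarith
        rw [abs_of_nonneg (by positivity), div_le_iff₀ this]
        have e3 : (1 : ℝ) ≤ (1 / ((m : ℝ) + 1)) * (c + m) := by
          rw [one_div, ← div_eq_inv_mul, le_div_iff₀ (by positivity)]
          linarith
        nlinarith
      rw [e, abs_mul]
      calc _ ≤ (1 + N * (1 / ((m : ℝ) + 1))) * 1 := by gcongr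
        _ = _ := by ring
    have h2 : 1 + N * (1 / ((m : ℝ) + 1)) ≤ (1 + 1 / ((m : ℝ) + 1)) ^ N :=
      one_add_mul_le_pow (by have : 0 ≤ 1 / ((m : ℝ) + 1) := by positivity
                             linarith) N
    calc _ ≤ ((m : ℝ) + 1) ^ N * (1 + 1 / ((m : ℝ) + 1)) ^ N := by
          gcongr
          exact h1.trans h2
      _ = (((m + 1 : ℕ) : ℝ) + 1) ^ N := by
          rw [← mul_pow]
          congr 1
          push_cast
          field_simp

lemma hcoef_succ_nonpos {a c : ℝ} (ha : 0 ≤ a) (hc : 0 < c) (m : ℕ) :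
    hcoef a (-1 / 2) c (m + 1) ≤ 0 := by
  induction m with
  | zero =>
    rw [hcoef_succ _ _ hc, hcoef_zero]
    have : 0 ≤ a / c := by positivity
    have e : 1 * ((a + (0 : ℕ)) * (-1 / 2 + (0 : ℕ)) / ((c + (0 : ℕ)) * ((0 : ℕ) + 1)))
        = -(1 / 2) * (a / c) := by
      push_cast; field_simp; ring
    rw [e]; nlinarith
  | succ m ih =>
    rw [hcoef_succ _ _ hc]
    apply mul_nonpos_of_nonpos_of_nonneg ih
    have hm : (0 : ℝ) ≤ m := Nat.cast_nonneg m
    have : (0 : ℝ) ≤ -1 / 2 + (m + 1 : ℕ) := by push_cast; linarith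
    positivity

lemma hyp2F1_ode {a b c s : ℝ} (hc : 0 < c) (hg : PolyGrowth (hcoef a b c)) (hs : |s| < 1) :
    s * (1 - s) * psum (dcoef (dcoef (hcoef a b c))) s
      + (c - (a + b + 1) * s) * psum (dcoef (hcoef a b c)) s
      - a * b * psum (hcoef a b c) s = 0 := by
  set u := hcoef a b c with hu
  have h0 := hg.hasSum hs
  have h1 := hg.dcoef.hasSum hs
  have h2 := hg.dcoef.dcoef.hasSum hs
  have e1 : HasSum (fun m : ℕ => (m * u m) * s ^ m) (s * psum (dcoef u) s) := by
    have := hasSum_shift (w := fun m : ℕ => (m : ℝ) * u m) (s := s) (A := psum (dcoef u) s)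
      (by simpa [dcoef] using h1)
    simpa using this
  have e2 : HasSum (fun m : ℕ => (m * dcoef u m) * s ^ m) (s * psum (dcoef (dcoef u)) s) := by
    have := hasSum_shift (w := fun m : ℕ => (m : ℝ) * dcoef u m) (s := s)
      (A := psum (dcoef (dcoef u)) s)
      (by simpa [dcoef] using h2)
    simpa using this
  have e3 : HasSum (fun m : ℕ => ((m : ℝ) * (m - 1) * u m) * s ^ m)
      (s * (s * psum (dcoef (dcoef u)) s)) := by
    have := hasSum_shift (w := fun m : ℕ => (m : ℝ) * (m - 1) * u m) (s := s)
      (A := s * psum (dcoef (dcoef u)) s)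
      (by convert e2 using 2 with m; simp only [dcoef]; push_cast; ring)
    simpa using this
  have tot := (((e2.sub e3).add (h1.mul_left c)).sub (e1.mul_left (a + b + 1))).sub
    (h0.mul_left (a * b))
  have hz : (fun m : ℕ => (m * dcoef u m) * s ^ m - ((m : ℝ) * (m - 1) * u m) * s ^ m
      + c * (dcoef u m * s ^ m) - (a + b + 1) * ((m * u m) * s ^ m)
      - a * b * (u m * s ^ m)) = fun _ => 0 := by
    funext m
    have hr : dcoef u m * (c + m) = u m * ((a + m) * (b + m)) := by
      have : c + m ≠ 0 := by positivity
      have : (m : ℝ) + 1 ≠ 0 := by positivity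
      rw [dcoef, hu, hcoef_succ _ _ hc]
      field_simp
    linear_combination s ^ m * hr
  rw [hz] at tot
  have := tot.unique hasSum_zero
  linarith

/-! ### Sturm comparison -/

lemma weight_hasDerivAt (α β : ℝ) {s : ℝ} (h0 : 0 < s) (h1 : s < 1) :
    HasDerivAt (fun s : ℝ => s ^ α * (1 - s) ^ β)
      (s ^ α * (1 - s) ^ β * ((α - (α + β) * s) / (s * (1 - s)))) s := by
  have h1' : 0 < 1 - s := by linarith
  have d1 := Real.hasDerivAt_rpow_const (x := s) (p := α) (Or.inl h0.ne')
  have d2 := (((hasDerivAt_id s).const_sub 1).rpow_const (p := β) (Or.inl h1'.ne'))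
  refine (d1.mul d2).congr_deriv ?_
  rw [Real.rpow_sub_one h0.ne', id, Real.rpow_sub_one h1'.ne']
  field_simp
  ring

/-- Sturm comparison between a solution `F` of the hypergeometric equation and a trial function
`G` in the rescaled variable `Y`, where `s = x + r * (δ - Y)` and `r = 1 / √n`. The hypothesis
`h_sub` says that `G` is a subsolution; then the weighted Wronskian of `F` and `G` is monotone in
`Y`, which is incompatible with its signs at `Y = 0` (where `G` vanishes) and at `Y = T` (where
`G` is past its maximum, while `F` is nonnegative and decreasing). -/
lemma sturm_contradiction {n k x r δ T : ℝ} {F F1 F2 G G1 G2 : ℝ → ℝ}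
    (hr : 0 < r) (hn : n * r ^ 2 = 1) (hx : k = n * x) (hT : 0 ≤ T)
    (h_left : 0 < x + r * (δ - T)) (h_right : x + r * δ < 1)
    (hF : ∀ s ∈ Set.Ioo (0 : ℝ) 1, HasDerivAt F (F1 s) s)
    (hF1 : ∀ s ∈ Set.Ioo (0 : ℝ) 1, HasDerivAt F1 (F2 s) s)
    (h_ode : ∀ s ∈ Set.Ioo (0 : ℝ) 1,
      s * (1 - s) * F2 s + (k / 2 - n / 2 * s) * F1 s + (n - 1) / 4 * F s = 0)
    (hF_nonneg : ∀ s ∈ Set.Ioo (0 : ℝ) 1, s ≤ x + r * δ → 0 ≤ F s)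
    (hF1_nonpos : ∀ s ∈ Set.Ioo (0 : ℝ) 1, F1 s ≤ 0)
    (hF_pos : 0 < F (x + r * δ))
    (hG : ∀ Y, HasDerivAt G (G1 Y) Y) (hG1 : ∀ Y, HasDerivAt G1 (G2 Y) Y)
    (hG0 : G 0 = 0) (hG10 : 0 < G1 0) (hGT : 0 ≤ G T) (hG1T : G1 T ≤ 0)
    (h_sub : ∀ Y ∈ Set.Icc 0 T,
      0 ≤ 2 * ((x + r * (δ - Y)) * (1 - (x + r * (δ - Y)))) * G2 Y + (δ - Y) * G1 Y
        + (1 / 2 - r ^ 2 / 2) * G Y) : False := by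
  set σ : ℝ → ℝ := fun Y => x + r * (δ - Y) with hσ
  set p : ℝ → ℝ := fun s => s ^ (k / 2) * (1 - s) ^ ((n - k) / 2) with hp
  have hmem : ∀ Y ∈ Set.Icc 0 T, σ Y ∈ Set.Ioo (0 : ℝ) 1 ∧ σ Y ≤ x + r * δ := by
    intro Y hY
    have h1 : r * Y ≤ r * T := mul_le_mul_of_nonneg_left hY.2 hr.le
    have h2 : 0 ≤ r * Y := mul_nonneg hr.le hY.1
    refine ⟨⟨?_, ?_⟩, ?_⟩ <;> simp only [hσ] <;> nlinarith
  have hp_pos : ∀ s ∈ Set.Ioo (0 : ℝ) 1, 0 < p s := fun s hs =>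
    mul_pos (Real.rpow_pos_of_pos hs.1 _) (Real.rpow_pos_of_pos (by linarith [hs.2]) _)
  set V : ℝ → ℝ := fun Y => p (σ Y) * (F (σ Y) * G1 Y + r * F1 (σ Y) * G Y) with hV
  have hV' : ∀ Y ∈ Set.Icc 0 T, ∃ v, HasDerivAt V v Y ∧ 0 ≤ v := by
    intro Y hY
    obtain ⟨hs, hs'⟩ := hmem Y hY
    have dσ : HasDerivAt σ (-r) Y := by
      have := (((hasDerivAt_id Y).const_sub δ).const_mul r).const_add x
      exact this.congr_deriv (by ring)
    have dp := (weight_hasDerivAt (k / 2) ((n - k) / 2) hs.1 hs.2).comp Y dσ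
    have dF := (hF _ hs).comp Y dσ
    have dF1 := (hF1 _ hs).comp Y dσ
    refine ⟨_, dp.mul ((dF.mul (hG1 Y)).add ((dF1.const_mul r).mul (hG Y))), ?_⟩
    have hode := h_ode _ hs
    have hsub := h_sub Y hY
    have hFn := hF_nonneg _ hs hs'
    have hpp := hp_pos _ hs
    have h0 : 0 < σ Y := hs.1
    have h1 : 0 < 1 - σ Y := by linarith [hs.2]
    have hk : k - n * σ Y = n * r * (Y - δ) := by simp only [hσ]; rw [hx]; ring
    change 0 ≤ 2 * (σ Y * (1 - σ Y)) * G2 Y + (δ - Y) * G1 Y + (1 / 2 - r ^ 2 / 2) * G Y at hsub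
    simp only [Function.comp]
    change 0 ≤ p (σ Y) * _ * -r * _ + p (σ Y) * _
    generalize σ Y = s at *
    have key : p s / (s * (1 - s)) * F s * (1 / 2) *
        (2 * (s * (1 - s)) * G2 Y + (δ - Y) * G1 Y + (1 / 2 - r ^ 2 / 2) * G Y)
        = p s * ((k / 2 - (k / 2 + (n - k) / 2) * s) / (s * (1 - s))) * -r *
          (F s * G1 Y + r * F1 s * G Y) +
        p s * (F1 s * -r * G1 Y + F s * G2 Y + (r * (F2 s * -r) * G Y + r * F1 s * G1 Y)) := by
      have hD : s * (1 - s) ≠ 0 := (mul_pos h0 h1).ne'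
      have e1 : p s * ((k / 2 - (k / 2 + (n - k) / 2) * s) / (s * (1 - s)))
          = p s / (s * (1 - s)) * (k / 2 - n / 2 * s) := by ring
      have e2 : p s = p s / (s * (1 - s)) * (s * (1 - s)) := (div_mul_cancel₀ _ hD).symm
      rw [e1]
      generalize p s / (s * (1 - s)) = w at *
      rw [e2]
      linear_combination (w * r ^ 2 * G Y) * hode + (w * r * F s * G1 Y / 2) * hk
        + w * (F s * G1 Y * (Y - δ) / 2 - F s * G Y / 4) * hn
    refine (?_ : (0 : ℝ) ≤ _).trans_eq key
    positivity
  have hmono : MonotoneOn V (Set.Icc 0 T) := by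
    refine monotoneOn_of_deriv_nonneg (convex_Icc 0 T) ?_ ?_ ?_
    · intro Y hY
      obtain ⟨v, hv, -⟩ := hV' Y hY
      exact hv.continuousAt.continuousWithinAt
    · intro Y hY
      obtain ⟨v, hv, -⟩ := hV' Y (interior_subset hY)
      exact hv.differentiableAt.differentiableWithinAt
    · intro Y hY
      obtain ⟨v, hv, hv0⟩ := hV' Y (interior_subset hY)
      rwa [hv.deriv]
  have h0T := hmono (Set.left_mem_Icc.2 hT) (Set.right_mem_Icc.2 hT) hT
  have hV0 : 0 < V 0 := by
    have hs := (hmem 0 (Set.left_mem_Icc.2 hT)).1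
    have e : σ 0 = x + r * δ := by simp [hσ]
    have : V 0 = p (σ 0) * (F (x + r * δ) * G1 0) := by simp only [hV, hG0, e]; ring
    rw [this]
    exact mul_pos (hp_pos _ hs) (mul_pos hF_pos hG10)
  have hVT : V T ≤ 0 := by
    obtain ⟨hs, hs'⟩ := hmem T (Set.right_mem_Icc.2 hT)
    apply mul_nonpos_of_nonneg_of_nonpos (hp_pos _ hs).le
    have := mul_nonpos_of_nonneg_of_nonpos (hF_nonneg _ hs hs') hG1T
    have := mul_nonneg (mul_nonneg hr.le (neg_nonneg.2 (hF1_nonpos _ hs))) hGT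
    linarith
  linarith

/-- If the zero `s₀` lay beyond `k / n + r * δ`, the function would be positive there, which a
subsolution `G` excludes. -/
lemma zero_le_of_trial {n k : ℕ} {s₀ r δ T : ℝ} {G G1 G2 : ℝ → ℝ} (hk : 2 ≤ k)
    (hs₀ : s₀ ∈ Set.Ioo (0 : ℝ) 1) (hn1 : 1 ≤ n)
    (hzero : hyp2F1 (((n : ℝ) - 1) / 2) (-1 / 2) ((k : ℝ) / 2) s₀ = 0)
    (huniq : ∀ s ∈ Set.Ioo (0 : ℝ) 1,
      hyp2F1 (((n : ℝ) - 1) / 2) (-1 / 2) ((k : ℝ) / 2) s = 0 → s = s₀)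
    (hr : 0 < r) (hn : (n : ℝ) * r ^ 2 = 1) (hT : 0 ≤ T)
    (h_left : 0 < (k : ℝ) / n + r * (δ - T))
    (hG : ∀ Y, HasDerivAt G (G1 Y) Y) (hG1 : ∀ Y, HasDerivAt G1 (G2 Y) Y)
    (hG0 : G 0 = 0) (hG10 : 0 < G1 0) (hGT : 0 ≤ G T) (hG1T : G1 T ≤ 0)
    (h_sub : (k : ℝ) / n + r * δ < 1 → ∀ Y ∈ Set.Icc 0 T,
      0 ≤ 2 * (((k : ℝ) / n + r * (δ - Y)) * (1 - ((k : ℝ) / n + r * (δ - Y)))) * G2 Y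
        + (δ - Y) * G1 Y + (1 / 2 - r ^ 2 / 2) * G Y) :
    s₀ ≤ (k : ℝ) / n + r * δ := by
  by_contra! hlt
  have hn1' : (1 : ℝ) ≤ n := by exact_mod_cast hn1
  have hk' : (2 : ℝ) ≤ k := by exact_mod_cast hk
  set u := hcoef (((n : ℝ) - 1) / 2) (-1 / 2) ((k : ℝ) / 2) with hu
  have hg : PolyGrowth u := hcoef_growth (by linarith) (by linarith)
  have habs : ∀ s ∈ Set.Ioo (0 : ℝ) 1, |s| < 1 := fun s hs => by
    rw [abs_of_pos hs.1]; exact hs.2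
  have hF : ∀ s ∈ Set.Ioo (0 : ℝ) 1, HasDerivAt (psum u) (psum (dcoef u) s) s :=
    fun s hs => hg.hasDerivAt (habs s hs)
  have hF1 : ∀ s ∈ Set.Ioo (0 : ℝ) 1, psum (dcoef u) s ≤ 0 := fun s hs =>
    tsum_nonpos fun m => mul_nonpos_of_nonpos_of_nonneg
      (mul_nonpos_of_nonneg_of_nonpos (by positivity)
        (hcoef_succ_nonpos (by linarith) (by linarith) m)) (pow_nonneg hs.1.le m)
  have hanti : AntitoneOn (psum u) (Set.Ioo (0 : ℝ) 1) := by
    refine antitoneOn_of_deriv_nonpos (convex_Ioo 0 1) ?_ ?_ ?_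
    · exact fun s hs => (hF s hs).continuousAt.continuousWithinAt
    · exact fun s hs => (hF s (interior_subset hs)).differentiableAt.differentiableWithinAt
    · intro s hs
      rw [(hF s (interior_subset hs)).deriv]
      exact hF1 s (interior_subset hs)
  have hz : psum u s₀ = 0 := hzero
  have hF0 : ∀ s ∈ Set.Ioo (0 : ℝ) 1, s ≤ s₀ → 0 ≤ psum u s := fun s hs hle => by
    rw [← hz]; exact hanti hs hs₀ hle
  have hmem : (k : ℝ) / n + r * δ ∈ Set.Ioo (0 : ℝ) 1 :=
    ⟨by nlinarith [mul_nonneg hr.le hT], hlt.trans hs₀.2⟩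
  refine sturm_contradiction (k := k) hr hn (by field_simp) hT h_left hmem.2 hF
    (fun s hs => hg.dcoef.hasDerivAt (habs s hs)) (fun s hs => ?_)
    (fun s hs hle => hF0 s hs (hle.trans hlt.le)) hF1 ?_ hG hG1 hG0 hG10 hGT hG1T
    (h_sub hmem.2)
  · have := hyp2F1_ode (by linarith) hg (habs s hs)
    linear_combination this
  · exact (hF0 _ hmem hlt.le).lt_of_ne' fun h => hlt.ne (huniq _ hmem h)

/-! ### Polynomial trial functions -/

/-- The trial function `Y + c₂ Y² + ⋯ + c₈ Y⁸`. -/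
def trial (c₂ c₃ c₄ c₅ c₆ c₇ c₈ Y : ℝ) : ℝ :=
  Y + c₂ * Y ^ 2 + c₃ * Y ^ 3 + c₄ * Y ^ 4 + c₅ * Y ^ 5 + c₆ * Y ^ 6 + c₇ * Y ^ 7 + c₈ * Y ^ 8

/-- The first derivative of `trial`. -/
def trial₁ (c₂ c₃ c₄ c₅ c₆ c₇ c₈ Y : ℝ) : ℝ :=
  1 + 2 * c₂ * Y + 3 * c₃ * Y ^ 2 + 4 * c₄ * Y ^ 3 + 5 * c₅ * Y ^ 4 + 6 * c₆ * Y ^ 5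
    + 7 * c₇ * Y ^ 6 + 8 * c₈ * Y ^ 7

/-- The second derivative of `trial`. -/
def trial₂ (c₂ c₃ c₄ c₅ c₆ c₇ c₈ Y : ℝ) : ℝ :=
  2 * c₂ + 6 * c₃ * Y + 12 * c₄ * Y ^ 2 + 20 * c₅ * Y ^ 3 + 30 * c₆ * Y ^ 4 + 42 * c₇ * Y ^ 5
    + 56 * c₈ * Y ^ 6

lemma trial_hasDerivAt (c₂ c₃ c₄ c₅ c₆ c₇ c₈ Y : ℝ) :
    HasDerivAt (trial c₂ c₃ c₄ c₅ c₆ c₇ c₈) (trial₁ c₂ c₃ c₄ c₅ c₆ c₇ c₈ Y) Y := by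
  have d := fun m : ℕ => hasDerivAt_pow m Y
  refine ((((((((hasDerivAt_id Y).add ((d 2).const_mul c₂)).add ((d 3).const_mul c₃)).add
    ((d 4).const_mul c₄)).add ((d 5).const_mul c₅)).add ((d 6).const_mul c₆)).add
    ((d 7).const_mul c₇)).add ((d 8).const_mul c₈)).congr_deriv ?_
  norm_num [trial₁]
  ring

lemma trial₁_hasDerivAt (c₂ c₃ c₄ c₅ c₆ c₇ c₈ Y : ℝ) :
    HasDerivAt (trial₁ c₂ c₃ c₄ c₅ c₆ c₇ c₈) (trial₂ c₂ c₃ c₄ c₅ c₆ c₇ c₈ Y) Y := by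
  have d := fun m : ℕ => hasDerivAt_pow m Y
  refine ((((((((hasDerivAt_const Y (1 : ℝ)).add ((hasDerivAt_id Y).const_mul (2 * c₂))).add
    ((d 2).const_mul (3 * c₃))).add
    ((d 3).const_mul (4 * c₄))).add ((d 4).const_mul (5 * c₅))).add ((d 5).const_mul (6 * c₆))).add
    ((d 6).const_mul (7 * c₇))).add ((d 7).const_mul (8 * c₈))).congr_deriv ?_
  norm_num [trial₂]
  ring

/-- Reduction of the subsolution inequality, for all admissible `x ≥ x₀` and `r ∈ [ra, rb]`, to two
polynomial inequalities in `Y` alone. As `g₂ ≤ 0`, an upper bound for `s * (1 - s)` is enough: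
this function decreases for `s ≥ 1 / 2`, which allows `x` to be replaced by `x₀`, and it lies below
its tangent at `x₀ + rb * (δ - Y)`. The resulting lower bound is affine in `r`, hence nonnegative
as soon as it is so for `r = ra` and `r = rb`. -/
lemma sub_of_endpoints {x₀ x δ r ra rb Y g g₁ g₂ : ℝ} (hx : x₀ ≤ x) (hab : ra < rb)
    (ha : ra ≤ r) (hb : r ≤ rb) (hra : 0 ≤ ra) (hhalf : 1 / 2 ≤ x₀ + r * (δ - Y))
    (hg : 0 ≤ g) (hg₂ : g₂ ≤ 0)
    (hLa : 0 ≤ 2 * ((x₀ + rb * (δ - Y)) * (1 - (x₀ + rb * (δ - Y)))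
      + (1 - 2 * (x₀ + rb * (δ - Y))) * ((ra - rb) * (δ - Y))) * g₂
      + (δ - Y) * g₁ + (1 / 2 - rb ^ 2 / 2) * g)
    (hLb : 0 ≤ 2 * ((x₀ + rb * (δ - Y)) * (1 - (x₀ + rb * (δ - Y)))) * g₂
      + (δ - Y) * g₁ + (1 / 2 - rb ^ 2 / 2) * g) :
    0 ≤ 2 * ((x + r * (δ - Y)) * (1 - (x + r * (δ - Y)))) * g₂
        + (δ - Y) * g₁ + (1 / 2 - r ^ 2 / 2) * g := by
  set s := x₀ + rb * (δ - Y) with hs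
  have h1 : (x + r * (δ - Y)) * (1 - (x + r * (δ - Y)))
      ≤ s * (1 - s) + (1 - 2 * s) * ((r - rb) * (δ - Y)) := by
    have e : s * (1 - s) + (1 - 2 * s) * ((r - rb) * (δ - Y))
        - (x + r * (δ - Y)) * (1 - (x + r * (δ - Y)))
        = ((r - rb) * (δ - Y)) ^ 2
          + (x - x₀) * (2 * (x₀ + r * (δ - Y)) - 1 + (x - x₀)) := by rw [hs]; ring
    have : 0 ≤ (x - x₀) * (2 * (x₀ + r * (δ - Y)) - 1 + (x - x₀)) :=
      mul_nonneg (by linarith) (by linarith)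
    nlinarith [sq_nonneg ((r - rb) * (δ - Y))]
  have h2 := mul_le_mul_of_nonpos_right h1 hg₂
  have h3 : r ^ 2 * g ≤ rb ^ 2 * g :=
    mul_le_mul_of_nonneg_right (pow_le_pow_left₀ (hra.trans ha) hb 2) hg
  have h4 : 0 ≤ 2 * (s * (1 - s) + (1 - 2 * s) * ((r - rb) * (δ - Y))) * g₂
      + (δ - Y) * g₁ + (1 / 2 - rb ^ 2 / 2) * g := by
    refine nonneg_of_mul_nonneg_right (a := rb - ra) ?_ (by linarith)
    have := add_nonneg (mul_nonneg (sub_nonneg.2 hb) hLa) (mul_nonneg (sub_nonneg.2 ha) hLb)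
    linarith
  linarith

/-- Nonnegativity of the (unnormalized) Bernstein basis polynomials on `[a, b]`. A polynomial whose
Bernstein coefficients on `[a, b]` are nonnegative is a nonnegative linear combination of these. -/
lemma bern {a b Y : ℝ} (ha : a ≤ Y) (hb : Y ≤ b) (i j : ℕ) : 0 ≤ (Y - a) ^ i * (b - Y) ^ j :=
  mul_nonneg (pow_nonneg (sub_nonneg.2 ha) i) (pow_nonneg (sub_nonneg.2 hb) j)

/-! ### Choice of the trial polynomials

In each range of `k / n`, the coefficients are rational roundings of a numerical solution, found by
linear programming, of the subsolution inequality. The intervals into which `[0, 13 / 5]` is split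
below are those on which the polynomial at hand has nonnegative Bernstein coefficients. -/

/-! ### Subsolution for `δ = 3 / 5` -/

lemma trial_a_nonneg {Y : ℝ} (hY : Y ∈ Set.Icc (0 : ℝ) (13 / 5)) :
    0 ≤ trial (-4411/10000) (773/5000) (-263/10000) 0 0 0 0 Y := by
  simp only [trial]
  obtain ⟨ha, hb⟩ := hY
  linarith [bern ha hb 0 4, bern ha hb 1 3, bern ha hb 2 2, bern ha hb 3 1,
    bern ha hb 4 0]

lemma trial_a_concave {Y : ℝ} (hY : Y ∈ Set.Icc (0 : ℝ) (13 / 5)) :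
    trial₂ (-4411/10000) (773/5000) (-263/10000) 0 0 0 0 Y ≤ 0 := by
  simp only [trial₂]
  have hcover : (0 ≤ Y ∧ Y ≤ (19/10)) ∨ ((19/10) ≤ Y ∧ Y ≤ (13/5)) := by
    grind
  rcases hcover with ⟨ha, hb⟩ | ⟨ha, hb⟩
  all_goals
    linarith [bern ha hb 0 2, bern ha hb 1 1, bern ha hb 2 0]

/-- The subsolution inequality, with `s * (1 - s)` replaced by `1 / 4` and `r` by its upper bound
`1291 / 10000`. -/
lemma trial_a_sub {Y : ℝ} (hY : Y ∈ Set.Icc (0 : ℝ) (13 / 5)) :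
    0 ≤ 1 / 2 * trial₂ (-4411/10000) (773/5000) (-263/10000) 0 0 0 0 Y
      + ((3/5) - Y) * trial₁ (-4411/10000) (773/5000) (-263/10000) 0 0 0 0 Y
      + (1 / 2 - (1291/10000) ^ 2 / 2) * trial (-4411/10000) (773/5000) (-263/10000) 0 0 0 0 Y := by
  simp only [trial, trial₁, trial₂]
  have hcover : (0 ≤ Y ∧ Y ≤ (11/10)) ∨ ((11/10) ≤ Y ∧ Y ≤ (39/20)) ∨
      ((39/20) ≤ Y ∧ Y ≤ (13/5)) := by
    grind
  rcases hcover with ⟨ha, hb⟩ | ⟨ha, hb⟩ | ⟨ha, hb⟩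
  all_goals
    linarith [bern ha hb 0 4, bern ha hb 1 3, bern ha hb 2 2, bern ha hb 3 1,
      bern ha hb 4 0]

/-! ### Subsolution for `k / n ≥ 7 / 8` and `δ = 2 / 5` -/

lemma trial_b_nonneg {Y : ℝ} (hY : Y ∈ Set.Icc (0 : ℝ) (13 / 5)) :
    0 ≤ trial (-20803/25000) (31517/50000) (-31151/100000) (4329/50000) (-103/10000) 0 0 Y := by
  simp only [trial]
  obtain ⟨ha, hb⟩ := hY
  linarith [bern ha hb 0 6, bern ha hb 1 5, bern ha hb 2 4, bern ha hb 3 3,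
    bern ha hb 4 2, bern ha hb 5 1, bern ha hb 6 0]

lemma trial_b_concave {Y : ℝ} (hY : Y ∈ Set.Icc (0 : ℝ) (13 / 5)) :
    trial₂ (-20803/25000) (31517/50000) (-31151/100000) (4329/50000) (-103/10000) 0 0 Y ≤ 0 := by
  simp only [trial₂]
  have hcover : (0 ≤ Y ∧ Y ≤ (7/4)) ∨ ((7/4) ≤ Y ∧ Y ≤ (13/5)) := by
    grind
  rcases hcover with ⟨ha, hb⟩ | ⟨ha, hb⟩
  all_goals
    linarith [bern ha hb 0 4, bern ha hb 1 3, bern ha hb 2 2, bern ha hb 3 1,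
      bern ha hb 4 0]

/-- The hypothesis `hLa` of `sub_of_endpoints`, with `ra = 0` and `rb = 1291 / 10000`. -/
lemma trial_b_left {Y : ℝ} (hY : Y ∈ Set.Icc (0 : ℝ) (13 / 5)) :
    0 ≤ 2 * (((7/8) + (1291/10000) * ((2/5) - Y)) * (1 - ((7/8) + (1291/10000) * ((2/5) - Y)))
      + (1 - 2 * ((7/8) + (1291/10000) * ((2/5) - Y))) * ((0 - (1291/10000)) * ((2/5) - Y)))
      * trial₂ (-20803/25000) (31517/50000) (-31151/100000) (4329/50000) (-103/10000) 0 0 Y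
      + ((2/5) - Y)
        * trial₁ (-20803/25000) (31517/50000) (-31151/100000) (4329/50000) (-103/10000) 0 0 Y
      + (1 / 2 - (1291/10000) ^ 2 / 2)
        * trial (-20803/25000) (31517/50000) (-31151/100000) (4329/50000) (-103/10000) 0 0 Y := by
  simp only [trial, trial₁, trial₂]
  have hcover : (0 ≤ Y ∧ Y ≤ (1/4)) ∨ ((1/4) ≤ Y ∧ Y ≤ (19/10)) ∨
      ((19/10) ≤ Y ∧ Y ≤ (13/5)) := by
    grind
  rcases hcover with ⟨ha, hb⟩ | ⟨ha, hb⟩ | ⟨ha, hb⟩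
  all_goals
    linarith [bern ha hb 0 6, bern ha hb 1 5, bern ha hb 2 4, bern ha hb 3 3,
      bern ha hb 4 2, bern ha hb 5 1, bern ha hb 6 0]

/-- The hypothesis `hLb` of `sub_of_endpoints`, with `rb = 1291 / 10000`. -/
lemma trial_b_right {Y : ℝ} (hY : Y ∈ Set.Icc (0 : ℝ) (13 / 5)) :
    0 ≤ 2 * (((7/8) + (1291/10000) * ((2/5) - Y)) * (1 - ((7/8) + (1291/10000) * ((2/5) - Y))))
      * trial₂ (-20803/25000) (31517/50000) (-31151/100000) (4329/50000) (-103/10000) 0 0 Y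
      + ((2/5) - Y)
        * trial₁ (-20803/25000) (31517/50000) (-31151/100000) (4329/50000) (-103/10000) 0 0 Y
      + (1 / 2 - (1291/10000) ^ 2 / 2)
        * trial (-20803/25000) (31517/50000) (-31151/100000) (4329/50000) (-103/10000) 0 0 Y := by
  simp only [trial, trial₁, trial₂]
  have hcover : (0 ≤ Y ∧ Y ≤ (13/20)) ∨ ((13/20) ≤ Y ∧ Y ≤ (7/5)) ∨ ((7/5) ≤ Y ∧ Y ≤ (11/5)) ∨
      ((11/5) ≤ Y ∧ Y ≤ (13/5)) := by
    grind
  rcases hcover with ⟨ha, hb⟩ | ⟨ha, hb⟩ | ⟨ha, hb⟩ | ⟨ha, hb⟩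
  all_goals
    linarith [bern ha hb 0 6, bern ha hb 1 5, bern ha hb 2 4, bern ha hb 3 3,
      bern ha hb 4 2, bern ha hb 5 1, bern ha hb 6 0]

/-! ### Subsolution for `k / n ≥ 9 / 10`, `δ = 9 / 25` and `r ≤ 1 / 12` -/

lemma trial_c_nonneg {Y : ℝ} (hY : Y ∈ Set.Icc (0 : ℝ) (13 / 5)) :
    0 ≤ trial (-897/1000) (7427/10000) (-4047/10000) (1249/10000) (-83/5000) 0 0 Y := by
  simp only [trial]
  obtain ⟨ha, hb⟩ := hY
  linarith [bern ha hb 0 6, bern ha hb 1 5, bern ha hb 2 4, bern ha hb 3 3,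
    bern ha hb 4 2, bern ha hb 5 1, bern ha hb 6 0]

lemma trial_c_concave {Y : ℝ} (hY : Y ∈ Set.Icc (0 : ℝ) (13 / 5)) :
    trial₂ (-897/1000) (7427/10000) (-4047/10000) (1249/10000) (-83/5000) 0 0 Y ≤ 0 := by
  simp only [trial₂]
  have hcover : (0 ≤ Y ∧ Y ≤ (8/5)) ∨ ((8/5) ≤ Y ∧ Y ≤ (13/5)) := by
    grind
  rcases hcover with ⟨ha, hb⟩ | ⟨ha, hb⟩
  all_goals
    linarith [bern ha hb 0 4, bern ha hb 1 3, bern ha hb 2 2, bern ha hb 3 1,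
      bern ha hb 4 0]

/-- The hypothesis `hLa` of `sub_of_endpoints`, with `ra = 0` and `rb = 1 / 12`. -/
lemma trial_c_left {Y : ℝ} (hY : Y ∈ Set.Icc (0 : ℝ) (13 / 5)) :
    0 ≤ 2 * (((9/10) + (1/12) * ((9/25) - Y)) * (1 - ((9/10) + (1/12) * ((9/25) - Y)))
      + (1 - 2 * ((9/10) + (1/12) * ((9/25) - Y))) * ((0 - (1/12)) * ((9/25) - Y)))
      * trial₂ (-897/1000) (7427/10000) (-4047/10000) (1249/10000) (-83/5000) 0 0 Y
      + ((9/25) - Y) * trial₁ (-897/1000) (7427/10000) (-4047/10000) (1249/10000) (-83/5000) 0 0 Y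
      + (1 / 2 - (1/12) ^ 2 / 2)
        * trial (-897/1000) (7427/10000) (-4047/10000) (1249/10000) (-83/5000) 0 0 Y := by
  simp only [trial, trial₁, trial₂]
  have hcover : (0 ≤ Y ∧ Y ≤ (1/2)) ∨ ((1/2) ≤ Y ∧ Y ≤ (39/20)) ∨
      ((39/20) ≤ Y ∧ Y ≤ (13/5)) := by
    grind
  rcases hcover with ⟨ha, hb⟩ | ⟨ha, hb⟩ | ⟨ha, hb⟩
  all_goals
    linarith [bern ha hb 0 6, bern ha hb 1 5, bern ha hb 2 4, bern ha hb 3 3,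
      bern ha hb 4 2, bern ha hb 5 1, bern ha hb 6 0]

/-- The hypothesis `hLb` of `sub_of_endpoints`, with `rb = 1 / 12`. -/
lemma trial_c_right {Y : ℝ} (hY : Y ∈ Set.Icc (0 : ℝ) (13 / 5)) :
    0 ≤ 2 * (((9/10) + (1/12) * ((9/25) - Y)) * (1 - ((9/10) + (1/12) * ((9/25) - Y))))
      * trial₂ (-897/1000) (7427/10000) (-4047/10000) (1249/10000) (-83/5000) 0 0 Y
      + ((9/25) - Y) * trial₁ (-897/1000) (7427/10000) (-4047/10000) (1249/10000) (-83/5000) 0 0 Y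
      + (1 / 2 - (1/12) ^ 2 / 2)
        * trial (-897/1000) (7427/10000) (-4047/10000) (1249/10000) (-83/5000) 0 0 Y := by
  simp only [trial, trial₁, trial₂]
  have hcover : (0 ≤ Y ∧ Y ≤ (3/4)) ∨ ((3/4) ≤ Y ∧ Y ≤ (7/4)) ∨ ((7/4) ≤ Y ∧ Y ≤ (13/5)) := by
    grind
  rcases hcover with ⟨ha, hb⟩ | ⟨ha, hb⟩ | ⟨ha, hb⟩
  all_goals
    linarith [bern ha hb 0 6, bern ha hb 1 5, bern ha hb 2 4, bern ha hb 3 3,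
      bern ha hb 4 2, bern ha hb 5 1, bern ha hb 6 0]

/-! ### Subsolution for `k / n ≥ 9 / 10`, `δ = 9 / 25` and `r ≥ 1 / 12` -/

lemma trial_d_nonneg {Y : ℝ} (hY : Y ∈ Set.Icc (0 : ℝ) (13 / 5)) :
    0 ≤
        trial (-11573/10000) (841/625) (-5747/5000) (6651/10000) (-61/250) (509/10000)
          (-23/5000) Y := by
  simp only [trial]
  obtain ⟨ha, hb⟩ := hY
  linarith [bern ha hb 0 8, bern ha hb 1 7, bern ha hb 2 6, bern ha hb 3 5,
    bern ha hb 4 4, bern ha hb 5 3, bern ha hb 6 2, bern ha hb 7 1,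
    bern ha hb 8 0]

lemma trial_d_concave {Y : ℝ} (hY : Y ∈ Set.Icc (0 : ℝ) (13 / 5)) :
    trial₂ (-11573/10000) (841/625) (-5747/5000) (6651/10000) (-61/250) (509/10000)
          (-23/5000) Y ≤ 0 := by
  simp only [trial₂]
  have hcover : (0 ≤ Y ∧ Y ≤ (17/10)) ∨ ((17/10) ≤ Y ∧ Y ≤ (13/5)) := by
    grind
  rcases hcover with ⟨ha, hb⟩ | ⟨ha, hb⟩
  all_goals
    linarith [bern ha hb 0 6, bern ha hb 1 5, bern ha hb 2 4, bern ha hb 3 3,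
      bern ha hb 4 2, bern ha hb 5 1, bern ha hb 6 0]

/-- The hypothesis `hLa` of `sub_of_endpoints`, with `ra = 1 / 12` and `rb = 1291 / 10000`. -/
lemma trial_d_left {Y : ℝ} (hY : Y ∈ Set.Icc (0 : ℝ) (13 / 5)) :
    0 ≤ 2 * (((9/10) + (1291/10000) * ((9/25) - Y)) * (1 - ((9/10) + (1291/10000) * ((9/25) - Y)))
      + (1 - 2 * ((9/10) + (1291/10000) * ((9/25) - Y))) * (((1/12) - (1291/10000)) * ((9/25) - Y)))
      * trial₂ (-11573/10000) (841/625) (-5747/5000) (6651/10000) (-61/250) (509/10000) (-23/5000) Y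
      + ((9/25) - Y)
        * trial₁ (-11573/10000) (841/625) (-5747/5000) (6651/10000) (-61/250)
          (509/10000) (-23/5000) Y
      + (1 / 2 - (1291/10000) ^ 2 / 2)
        * trial (-11573/10000) (841/625) (-5747/5000) (6651/10000) (-61/250) (509/10000)
          (-23/5000) Y := by
  simp only [trial, trial₁, trial₂]
  have hcover : (0 ≤ Y ∧ Y ≤ (2/5)) ∨ ((2/5) ≤ Y ∧ Y ≤ (37/20)) ∨
      ((37/20) ≤ Y ∧ Y ≤ (13/5)) := by
    grind
  rcases hcover with ⟨ha, hb⟩ | ⟨ha, hb⟩ | ⟨ha, hb⟩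
  all_goals
    linarith [bern ha hb 0 8, bern ha hb 1 7, bern ha hb 2 6, bern ha hb 3 5,
      bern ha hb 4 4, bern ha hb 5 3, bern ha hb 6 2, bern ha hb 7 1,
      bern ha hb 8 0]

/-- The hypothesis `hLb` of `sub_of_endpoints`, with `rb = 1291 / 10000`. -/
lemma trial_d_right {Y : ℝ} (hY : Y ∈ Set.Icc (0 : ℝ) (13 / 5)) :
    0 ≤ 2 * (((9/10) + (1291/10000) * ((9/25) - Y)) * (1 - ((9/10) + (1291/10000) * ((9/25) - Y))))
      * trial₂ (-11573/10000) (841/625) (-5747/5000) (6651/10000) (-61/250) (509/10000) (-23/5000) Y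
      + ((9/25) - Y)
        * trial₁ (-11573/10000) (841/625) (-5747/5000) (6651/10000) (-61/250)
          (509/10000) (-23/5000) Y
      + (1 / 2 - (1291/10000) ^ 2 / 2)
        * trial (-11573/10000) (841/625) (-5747/5000) (6651/10000) (-61/250) (509/10000)
          (-23/5000) Y := by
  simp only [trial, trial₁, trial₂]
  have hcover : (0 ≤ Y ∧ Y ≤ (7/10)) ∨ ((7/10) ≤ Y ∧ Y ≤ (37/20)) ∨
      ((37/20) ≤ Y ∧ Y ≤ (51/20)) ∨ ((51/20) ≤ Y ∧ Y ≤ (13/5)) := by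
    grind
  rcases hcover with ⟨ha, hb⟩ | ⟨ha, hb⟩ | ⟨ha, hb⟩ | ⟨ha, hb⟩
  all_goals
    linarith [bern ha hb 0 8, bern ha hb 1 7, bern ha hb 2 6, bern ha hb 3 5,
      bern ha hb 4 4, bern ha hb 5 3, bern ha hb 6 2, bern ha hb 7 1,
      bern ha hb 8 0]

/-! ### The zero estimates -/

/-- `zero_le_of_trial` for a trial polynomial on `[0, 13 / 5]`. -/
lemma zero_le_of_poly {n k : ℕ} {s₀ r δ : ℝ} (c₂ c₃ c₄ c₅ c₆ c₇ c₈ : ℝ) (hk : 2 ≤ k)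
    (hs₀ : s₀ ∈ Set.Ioo (0 : ℝ) 1) (hn1 : 1 ≤ n)
    (hzero : hyp2F1 (((n : ℝ) - 1) / 2) (-1 / 2) ((k : ℝ) / 2) s₀ = 0)
    (huniq : ∀ s ∈ Set.Ioo (0 : ℝ) 1,
      hyp2F1 (((n : ℝ) - 1) / 2) (-1 / 2) ((k : ℝ) / 2) s = 0 → s = s₀)
    (hr : 0 < r) (hn : (n : ℝ) * r ^ 2 = 1)
    (h_left : 0 < (k : ℝ) / n + r * (δ - 13 / 5))
    (hT : 0 ≤ trial c₂ c₃ c₄ c₅ c₆ c₇ c₈ (13 / 5))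
    (h₁T : trial₁ c₂ c₃ c₄ c₅ c₆ c₇ c₈ (13 / 5) ≤ 0)
    (h_sub : ∀ Y ∈ Set.Icc (0 : ℝ) (13 / 5),
      0 ≤ 2 * (((k : ℝ) / n + r * (δ - Y)) * (1 - ((k : ℝ) / n + r * (δ - Y))))
          * trial₂ c₂ c₃ c₄ c₅ c₆ c₇ c₈ Y
        + (δ - Y) * trial₁ c₂ c₃ c₄ c₅ c₆ c₇ c₈ Y
        + (1 / 2 - r ^ 2 / 2) * trial c₂ c₃ c₄ c₅ c₆ c₇ c₈ Y) :
    s₀ ≤ (k : ℝ) / n + r * δ :=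
  zero_le_of_trial hk hs₀ hn1 hzero huniq hr hn (by norm_num) h_left
    (trial_hasDerivAt c₂ c₃ c₄ c₅ c₆ c₇ c₈) (trial₁_hasDerivAt c₂ c₃ c₄ c₅ c₆ c₇ c₈)
    (by simp [trial]) (by simp [trial₁]) hT h₁T fun _ => h_sub

/-- For `n ≥ 60` and `1 ≤ k ≤ n-2`, letting `s₀` be the unique zero in
`(0,1)` of `s ↦ ₂F₁((n-1)/2, -1/2; k/2; s)`, one has:
(a) `s₀ ≤ k/n + 3/(5√n)` if `1/3 ≤ k/n ≤ 7/8`;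
(b) `s₀ ≤ k/n + 2/(5√n)` if `7/8 ≤ k/n ≤ 9/10`;
(c) `s₀ ≤ k/n + 9/(25√n)` if `9/10 ≤ k/n ≤ 15/16`. -/
theorem hypergeometric_zero_estimates
    (n k : ℕ) (hn : 60 ≤ n) (hk1 : 1 ≤ k) (hk2 : k ≤ n - 2)
    (s₀ : ℝ) (hs₀ : s₀ ∈ Set.Ioo (0 : ℝ) 1)
    (hzero : hyp2F1 (((n : ℝ) - 1) / 2) (-1 / 2) ((k : ℝ) / 2) s₀ = 0)
    (huniq : ∀ s ∈ Set.Ioo (0 : ℝ) 1,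
      hyp2F1 (((n : ℝ) - 1) / 2) (-1 / 2) ((k : ℝ) / 2) s = 0 → s = s₀) :
    ((1 / 3 : ℝ) ≤ (k : ℝ) / (n : ℝ) → (k : ℝ) / (n : ℝ) ≤ 7 / 8 →
      s₀ ≤ (k : ℝ) / (n : ℝ) + 3 / (5 * Real.sqrt (n : ℝ))) ∧
    ((7 / 8 : ℝ) ≤ (k : ℝ) / (n : ℝ) → (k : ℝ) / (n : ℝ) ≤ 9 / 10 →
      s₀ ≤ (k : ℝ) / (n : ℝ) + 2 / (5 * Real.sqrt (n : ℝ))) ∧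
    ((9 / 10 : ℝ) ≤ (k : ℝ) / (n : ℝ) → (k : ℝ) / (n : ℝ) ≤ 15 / 16 →
      s₀ ≤ (k : ℝ) / (n : ℝ) + 9 / (25 * Real.sqrt (n : ℝ))) := by
  have hn60 : (60 : ℝ) ≤ n := by exact_mod_cast hn
  have hn0 : (0 : ℝ) < n := by linarith
  have hsq : 0 < √(n : ℝ) := Real.sqrt_pos.2 hn0
  set r : ℝ := 1 / √(n : ℝ) with hr_def
  have hr : 0 < r := by positivity
  have hnr : (n : ℝ) * r ^ 2 = 1 := by
    rw [hr_def, div_pow, one_pow, Real.sq_sqrt hn0.le]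
    field_simp
  -- `1291 / 10000` is a rational upper bound for `1 / √60`.
  have hrb : r ≤ 1291 / 10000 := by
    by_contra! h
    nlinarith
  have ea : 3 / (5 * √(n : ℝ)) = r * (3 / 5) := by rw [hr_def]; field_simp
  have eb : 2 / (5 * √(n : ℝ)) = r * (2 / 5) := by rw [hr_def]; field_simp
  have ec : 9 / (25 * √(n : ℝ)) = r * (9 / 25) := by rw [hr_def]; field_simp
  have hk : ∀ x : ℝ, 1 / 3 ≤ x → x ≤ (k : ℝ) / n → 2 ≤ k := fun x hx hxk => by
    have h : (1 / 3 : ℝ) ≤ (k : ℝ) / n := hx.trans hxk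
    rw [le_div_iff₀ hn0] at h
    have : (2 : ℝ) ≤ k := by linarith
    exact_mod_cast this
  have hT : (13 / 5 : ℝ) ∈ Set.Icc (0 : ℝ) (13 / 5) := by norm_num
  rw [ea, eb, ec]
  refine ⟨fun hx _ => ?_, fun hx _ => ?_, fun hx _ => ?_⟩
  · refine zero_le_of_poly _ _ _ _ _ _ _ (hk _ le_rfl hx) hs₀ (by omega) hzero huniq hr hnr
      (by linarith) (trial_a_nonneg hT) (by norm_num [trial₁]) fun Y hY => ?_
    set s := (k : ℝ) / n + r * (3 / 5 - Y)
    have h1 : 2 * (s * (1 - s)) ≤ 1 / 2 := by nlinarith [sq_nonneg (2 * s - 1)]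
    have h2 := mul_le_mul_of_nonpos_right h1 (trial_a_concave hY)
    have h3 := mul_le_mul_of_nonneg_right (pow_le_pow_left₀ hr.le hrb 2) (trial_a_nonneg hY)
    linarith [trial_a_sub hY]
  · refine zero_le_of_poly _ _ _ _ _ _ _ (hk _ (by norm_num) hx) hs₀ (by omega) hzero huniq hr hnr
      (by linarith) (trial_b_nonneg hT) (by norm_num [trial₁]) fun Y hY => ?_
    refine sub_of_endpoints hx (by norm_num) hr.le hrb le_rfl ?_ (trial_b_nonneg hY)
      (trial_b_concave hY) (trial_b_left hY) (trial_b_right hY)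
    nlinarith [mul_le_mul_of_nonneg_left hY.2 hr.le]
  · have hhalf : ∀ Y ∈ Set.Icc (0 : ℝ) (13 / 5), 1 / 2 ≤ 9 / 10 + r * (9 / 25 - Y) :=
      fun Y hY => by nlinarith [mul_le_mul_of_nonneg_left hY.2 hr.le]
    rcases le_total r (1 / 12) with h12 | h12
    · refine zero_le_of_poly _ _ _ _ _ _ _ (hk _ (by norm_num) hx) hs₀ (by omega) hzero huniq hr
        hnr (by linarith) (trial_c_nonneg hT) (by norm_num [trial₁]) fun Y hY => ?_
      exact sub_of_endpoints hx (by norm_num) hr.le h12 le_rfl (hhalf Y hY) (trial_c_nonneg hY)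
        (trial_c_concave hY) (trial_c_left hY) (trial_c_right hY)
    · refine zero_le_of_poly _ _ _ _ _ _ _ (hk _ (by norm_num) hx) hs₀ (by omega) hzero huniq hr
        hnr (by linarith) (trial_d_nonneg hT) (by norm_num [trial₁]) fun Y hY => ?_
      exact sub_of_endpoints hx (by norm_num) h12 hrb (by norm_num) (hhalf Y hY)
        (trial_d_nonneg hY) (trial_d_concave hY) (trial_d_left hY) (trial_d_right hY)
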